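/- Let S¹ = N(σ¹_0,…,σ¹_{m₁}), S² = N(σ²_0,…,σ²_{m₂}) be Nikishin systems with σ¹_0 = σ²_0. Let I₁ ⊂ ℤ₊^{m₁+1}(•) and I₂ ⊂ ℤ₊^{m₂+1}(•) be complete ordered sequences of multi-indices. For each integer n ≥ 1, let A_n be the 'monic' mixed type multiple orthogonal polynomial system relative to (n₁(n); n₂(n−1)) and (S¹,S²), where n₁(n) ∈ I₁ has |n₁(n)| = n and n₂(n−1) ∈ I₂ has |n₂(n−1)| = n − 1, with associated form 𝔄_n(x) = Σ_{j=0}^{m₁} a_{n,j}(x) ŝ¹_{1,j}(x); and let B_n be the 'monic' mixed type system relative to (n₂(n); n₁(n−1)) and (S²,S¹) (roles of S¹ and S² interchanged), with associated form 𝔅_n(x) = Σ_{k=0}^{m₂} b_{n,k}(x) ŝ²_{1,k}(x). Then the sequences are bi-orthogonal: for all n, n′ ≥ 1, ∫ 𝔅_{n′}(x) 𝔄_n(x) dσ²_0(x) = 0 if n ≠ n′, and ∫ 𝔅_n(x) 𝔄_n(x) dσ²_0(x) ≠ 0. -/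

import Mathlib

open MeasureTheory Polynomial Set Filter

noncomputable section

/-- The support of a Borel measure on `ℝ`: points all of whose open neighborhoods
have positive measure. -/
def msupport (μ : Measure ℝ) : Set ℝ :=
  {x : ℝ | ∀ U : Set ℝ, IsOpen U → x ∈ U → μ U ≠ 0}

/-- The copy of a real set inside `ℂ`. -/
def cpx (s : Set ℝ) : Set ℂ := (fun x : ℝ => (x : ℂ)) '' s

/-- `nikhat μ e j g` is the Cauchy transform of the measure `⟨σ_j, …, σ_{j+g}⟩`,
where `σ_i = (e i) • (μ i)` is a measure of constant sign. -/
def nikhat (μ : ℕ → Measure ℝ) (e : ℕ → ℝ) : ℕ → ℕ → ℂ → ℂ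
  | j, 0, z => (e j : ℂ) * ∫ t, 1 / (z - (t : ℂ)) ∂(μ j)
  | j, g + 1, z => (e j : ℂ) * ∫ t, nikhat μ e (j + 1) g (t : ℂ) / (z - (t : ℂ)) ∂(μ j)

/-- The Cauchy transform `ŝ_{j+1,k}` of `s_{j+1,k} = ⟨σ_{j+1},…,σ_k⟩`, with the
convention that it is `≡ 1` when `k ≤ j`. -/
def wt (μ : ℕ → Measure ℝ) (e : ℕ → ℝ) (j k : ℕ) (z : ℂ) : ℂ :=
  if j < k then nikhat μ e (j + 1) (k - (j + 1)) z else 1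

/-- Integral of `f` against the measure `s_{j,k} = ⟨σ_j, …, σ_k⟩`
(whose density with respect to `σ_j` is `ŝ_{j+1,k}`). -/
def sInt (μ : ℕ → Measure ℝ) (e : ℕ → ℝ) (j k : ℕ) (f : ℝ → ℂ) : ℂ :=
  (e j : ℂ) * ∫ x, f x * wt μ e j k (x : ℂ) ∂(μ j)

/-- The linear form `𝒜_{n,j}(z) = ∑_{k=j}^{m₁} a_k(z) ŝ¹_{j+1,k}(z)`. -/
def linForm (μ : ℕ → Measure ℝ) (e : ℕ → ℝ) (m₁ j : ℕ) (A : ℕ → Polynomial ℝ)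
    (z : ℂ) : ℂ :=
  ∑ k ∈ Finset.Icc j m₁, Polynomial.aeval z (A k) * wt μ e j k z

/-- The linear forms with negative index:
`𝒜_{n,-j-1}(z) = ∫ 𝒜_{n,-j}(x) dσ²_j(x) / (z - x)`. -/
def linFormNeg (μ : ℕ → Measure ℝ) (e : ℕ → ℝ) (F : ℂ → ℂ) : ℕ → ℂ → ℂ
  | 0 => F
  | j + 1 => fun z => (e j : ℂ) * ∫ x, linFormNeg μ e F j (x : ℂ) / (z - (x : ℂ)) ∂(μ j)

/-- A Nikishin system `N(σ_0,…,σ_m)` of measures of constant sign `σ_j = (e j) • (μ j)`,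
with `Co(supp σ_j) = Δ_j = [a j, b j]` and `Δ_j ∩ Δ_{j+1} = ∅`. -/
structure NikSys (m : ℕ) where
  μ : ℕ → Measure ℝ
  e : ℕ → ℝ
  a : ℕ → ℝ
  b : ℕ → ℝ
  fin : ∀ j, IsFiniteMeasure (μ j)
  sgn : ∀ j, e j = 1 ∨ e j = -1
  hull : ∀ j ≤ m, convexHull ℝ (msupport (μ j)) = Set.Icc (a j) (b j)
  inf : ∀ j ≤ m, (msupport (μ j)).Infinite
  disj : ∀ j < m, Set.Icc (a j) (b j) ∩ Set.Icc (a (j + 1)) (b (j + 1)) = ∅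

/-- Decreasing multi-index (the class `ℤ₊^{m+1}(•)`). -/
def Decr (m : ℕ) (n : ℕ → ℕ) : Prop := ∀ j < m, n (j + 1) ≤ n j

/-- `|n| = n_0 + ⋯ + n_m`. -/
def msum (m : ℕ) (n : ℕ → ℕ) : ℕ := ∑ j ∈ Finset.range (m + 1), n j

/-- `N_{1,j} = n_j + ⋯ + n_m` (partial tail sums). -/
def tailSum (m : ℕ) (n : ℕ → ℕ) (j : ℕ) : ℕ := ∑ k ∈ Finset.Icc j m, n k

/-- Mixed type multiple orthogonal polynomials relative to `(n1;n2)` and `(S1,S2)`. -/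
def IsMOP (m₁ m₂ : ℕ) (S1 : NikSys m₁) (S2 : NikSys m₂)
    (n1 n2 : ℕ → ℕ) (A : ℕ → Polynomial ℝ) : Prop :=
  (∀ j ≤ m₁, (A j).degree < (n1 j : WithBot ℕ)) ∧
  (∃ j ≤ m₁, A j ≠ 0) ∧
  ∀ k ≤ m₂, ∀ ν < n2 k,
    sInt S2.μ S2.e 0 k (fun x => (x : ℂ) ^ ν * linForm S1.μ S1.e m₁ 0 A (x : ℂ)) = 0

/-- The "monic" normalization: the last entry different from zero has leading
coefficient `1`. -/
def MonicLast (m₁ : ℕ) (A : ℕ → Polynomial ℝ) : Prop :=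
  ∃ j ≤ m₁, (A j).Monic ∧ ∀ k, j < k → k ≤ m₁ → A k = 0

/-- `n^l`: increase the `l`-th component by one. -/
def bump (l : ℕ) (n : ℕ → ℕ) : ℕ → ℕ := fun j => if j = l then n j + 1 else n j


/-- `I` (given as a function `ℕ → (ℕ → ℕ)`) is a complete ordered sequence of
multi-indices in `ℤ₊^{m+1}(•)`: for each `n` the multi-index `I n` is decreasing,
supported on `{0,…,m}`, has total size `n`, and any two members are comparable
componentwise. -/
def CompleteOrdered (m : ℕ) (I : ℕ → (ℕ → ℕ)) : Prop :=
  (∀ n, Decr m (I n) ∧ (∀ j, m < j → I n j = 0) ∧ msum m (I n) = n) ∧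
  ∀ n n', n ≤ n' → ∀ j, I n j ≤ I n' j

/-! ### Measures with compact infinite support -/

structure Good (μ : Measure ℝ) (a b : ℝ) : Prop where
  fin : IsFiniteMeasure μ
  inf : (msupport μ).Infinite
  sub : msupport μ ⊆ Set.Icc a b

lemma Good.ae {μ : Measure ℝ} {a b : ℝ} (h : Good μ a b) : ∀ᵐ t ∂μ, t ∈ Set.Icc a b := by
  have h0 : μ (msupport μ)ᶜ = 0 := by
    apply measure_null_of_locally_null
    intro x hx
    simp only [msupport, Set.mem_compl_iff, Set.mem_ofPred_eq, not_forall, not_not] at hx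
    obtain ⟨U, hU, hxU, h0⟩ := hx
    exact ⟨U, mem_nhdsWithin_of_mem_nhds (hU.mem_nhds hxU), h0⟩
  have : μ (Set.Icc a b)ᶜ = 0 := measure_mono_null (Set.compl_subset_compl.mpr h.sub) h0
  exact this

lemma Good.restrict {μ : Measure ℝ} {a b : ℝ} (h : Good μ a b) :
    μ.restrict (Set.Icc a b) = μ := Measure.restrict_eq_self_of_ae_mem h.ae

lemma Good.integrable {μ : Measure ℝ} {a b : ℝ} (h : Good μ a b) {f : ℝ → ℝ}
    (hf : ContinuousOn f (Set.Icc a b)) : Integrable f μ := by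
  have := h.fin
  have : IntegrableOn f (Set.Icc a b) μ := hf.integrableOn_compact isCompact_Icc
  rwa [IntegrableOn, h.restrict] at this

lemma Good.eq_zero {μ : Measure ℝ} {a b : ℝ} (h : Good μ a b) {f : ℝ → ℝ}
    (hf : ContinuousOn f (Set.Icc a b)) (h0 : ∀ x ∈ Set.Icc a b, 0 ≤ f x)
    (hi : ∫ x, f x ∂μ = 0) : ∀ x ∈ msupport μ, f x = 0 := by
  have hae : f =ᵐ[μ] 0 := by
    rw [← integral_eq_zero_iff_of_nonneg_ae _ (h.integrable hf)]
    · exact hi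
    · filter_upwards [h.ae] with x hx using h0 x hx
  intro x hx
  by_contra hne
  have hxI := h.sub hx
  have hmem : {y | f y ≠ 0} ∈ nhdsWithin x (Set.Icc a b) :=
    (hf x hxI).eventually_ne hne
  rw [mem_nhdsWithin] at hmem
  obtain ⟨U, hU, hxU, hsub⟩ := hmem
  apply hx U hU hxU
  have h1 : ∀ᵐ y ∂μ, y ∉ U := by
    filter_upwards [h.ae, hae] with y hy hy0 hyU
    exact hsub ⟨hyU, hy⟩ hy0
  simpa [ae_iff] using h1

lemma sign_poly (Z : Finset ℝ) : ∀ (K : Set ℝ) (G : ℝ → ℝ),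
    (∀ x ∈ K, ∀ y ∈ K, x ∉ Z → y ∉ Z → x ≤ y → (∀ z ∈ Z, ¬ (x ≤ z ∧ z ≤ y)) → 0 < G x * G y) →
    ∃ (q : ℝ[X]) (s : ℝ), q.natDegree ≤ Z.card ∧ (∀ x, (∀ z ∈ Z, z < x) → 0 < q.eval x) ∧
      s ≠ 0 ∧ ∀ x ∈ K, x ∉ Z → 0 < s * (q.eval x * G x) := by
  induction Z using Finset.induction_on_max with
  | empty =>
    intro K G h
    rcases K.eq_empty_or_nonempty with rfl | ⟨x0, hx0⟩
    · exact ⟨1, 1, by simp, by simp, by simp, by simp⟩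
    · refine ⟨1, G x0, by simp, by simp, ?_, ?_⟩
      · have := h x0 hx0 x0 hx0 (by simp) (by simp) le_rfl (by simp)
        intro h0; simp [h0] at this
      · intro x hx _
        rcases le_total x0 x with hl | hl
        · simpa using h x0 hx0 x hx (by simp) (by simp) hl (by simp)
        · simpa [mul_comm] using h x hx x0 hx0 (by simp) (by simp) hl (by simp)
  | insert z Z hz ih =>
    intro K G h
    have hzZ : z ∉ Z := fun hh => lt_irrefl _ (hz z hh)
    obtain ⟨q, s, hd, hpos, hs, hq⟩ := ih (K ∩ Set.Iio z) G (by
      intro x hx y hy hxZ hyZ hxy hn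
      refine h x hx.1 y hy.1 ?_ ?_ hxy ?_
      · simp only [Finset.mem_insert, not_or]; exact ⟨ne_of_lt hx.2, hxZ⟩
      · simp only [Finset.mem_insert, not_or]; exact ⟨ne_of_lt hy.2, hyZ⟩
      · intro w hw
        rcases Finset.mem_insert.mp hw with rfl | hw
        · intro hh; exact absurd hy.2 (not_lt.mpr hh.2)
        · exact hn w hw)
    have hcard : (insert z Z).card = Z.card + 1 := Finset.card_insert_of_notMem hzZ
    have hright : ∀ x ∈ K, ∀ y ∈ K, z < x → z < y → 0 < G x * G y := by
      have key : ∀ x ∈ K, ∀ y ∈ K, z < x → z < y → x ≤ y → 0 < G x * G y := by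
        intro x hx y hy hzx hzy hxy
        have hni : ∀ u, z < u → u ∉ insert z Z := by
          intro u hu hm
          rcases Finset.mem_insert.mp hm with rfl | hm
          · exact lt_irrefl _ hu
          · exact lt_irrefl _ (hu.trans (hz u hm))
        refine h x hx y hy (hni x hzx) (hni y hzy) hxy ?_
        intro w hw hh
        exact hni w (hzx.trans_le hh.1) hw
      intro x hx y hy hzx hzy
      rcases le_total x y with hl | hl
      · exact key x hx y hy hzx hzy hl
      · rw [mul_comm]; exact key y hy x hx hzy hzx hl
    have hqr : ∀ x, z < x → 0 < q.eval x := fun x hx => hpos x (fun w hw => (hz w hw).trans hx)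
    by_cases hcase : ∃ x1 ∈ K, z < x1 ∧ s * G x1 < 0
    · obtain ⟨x1, hx1, hzx1, hneg⟩ := hcase
      refine ⟨q * (X - C z), -s, ?_, ?_, by simpa using hs, ?_⟩
      · rw [hcard]
        refine natDegree_mul_le.trans ?_
        rw [natDegree_X_sub_C]; omega
      · intro x hx
        have h1 : z < x := hx z (Finset.mem_insert_self _ _)
        simp only [eval_mul, eval_sub, eval_X, eval_C]
        exact mul_pos (hqr x h1) (sub_pos.mpr h1)
      · intro x hx hxZ
        simp only [Finset.mem_insert, not_or] at hxZ
        simp only [eval_mul, eval_sub, eval_X, eval_C]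
        rcases lt_or_gt_of_ne hxZ.1 with hlt | hgt
        · have h1 := hq x ⟨hx, hlt⟩ hxZ.2
          have := mul_pos h1 (sub_pos.mpr hlt)
          nlinarith
        · have h1 := hright x hx x1 hx1 hgt hzx1
          have h2 : s * G x < 0 := by
            have h3 : 0 < (s * G x) * (s * G x1) := by
              have : 0 < s ^ 2 * (G x * G x1) := by positivity
              nlinarith
            by_contra hh
            push Not at hh
            nlinarith [mul_nonneg hh (neg_pos.mpr hneg).le]
          have := mul_pos (mul_pos (hqr x hgt) (sub_pos.mpr hgt)) (neg_pos.mpr h2)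
          nlinarith
    · push Not at hcase
      refine ⟨q, s, by omega, fun x hx => hqr x (hx z (Finset.mem_insert_self _ _)), hs, ?_⟩
      intro x hx hxZ
      simp only [Finset.mem_insert, not_or] at hxZ
      rcases lt_or_gt_of_ne hxZ.1 with hlt | hgt
      · exact hq x ⟨hx, hlt⟩ hxZ.2
      · have h1 := hcase x hx hgt
        have h2 := hright x hx x hx hgt hgt
        have h3 : G x ≠ 0 := by intro h0; simp [h0] at h2
        have h4 : 0 < s * G x := lt_of_le_of_ne h1 (mul_ne_zero hs h3).symm
        have := mul_pos (hqr x hgt) h4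
        nlinarith

lemma zeros_of_orth {μ : Measure ℝ} {a b : ℝ} (h : Good μ a b) {G : ℝ → ℝ}
    (hG : ContinuousOn G (Set.Icc a b)) (N : ℕ)
    (ho : ∀ q : ℝ[X], q.degree < (N : WithBot ℕ) → ∫ t, q.eval t * G t ∂μ = 0) :
    ∃ Z : Finset ℝ, (∀ z ∈ Z, z ∈ Set.Icc a b ∧ G z = 0) ∧ Z.card = N := by
  by_contra hcon
  set S : Set ℝ := {x | x ∈ Set.Icc a b ∧ G x = 0} with hS
  have hfin : S.Finite := by
    by_contra hinf
    obtain ⟨Z, hZ, hc⟩ := Set.Infinite.exists_subset_card_eq hinf N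
    exact hcon ⟨Z, fun z hz => hZ hz, hc⟩
  set Z := hfin.toFinset with hZ
  have hmemZ : ∀ x, x ∈ Z ↔ x ∈ Set.Icc a b ∧ G x = 0 := by intro x; simp [hZ, hS]
  have hlt : Z.card < N := by
    by_contra hge
    push Not at hge
    obtain ⟨Z', hs, hc⟩ := Finset.exists_subset_card_eq hge
    exact hcon ⟨Z', fun z hz => (hmemZ z).mp (hs hz), hc⟩
  obtain ⟨q, s, hd, hpos, hs, hq⟩ := sign_poly Z (Set.Icc a b) G (by
    intro x hx y hy hxZ hyZ hxy hn
    by_contra hle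
    push Not at hle
    have hsub : Set.Icc x y ⊆ Set.Icc a b := Set.Icc_subset_Icc hx.1 hy.2
    have : ∃ w ∈ Set.Icc x y, G w = 0 := by
      have hc := hG.mono hsub
      rcases le_total (G x) 0 with hx0 | hx0
      · rcases le_total 0 (G y) with hy0 | hy0
        · exact intermediate_value_Icc hxy hc ⟨hx0, hy0⟩
        · have : G x = 0 ∨ G y = 0 := by
            have := mul_nonneg_of_nonpos_of_nonpos hx0 hy0
            exact mul_eq_zero.mp (le_antisymm hle this)
          rcases this with h0 | h0
          · exact ⟨x, ⟨le_rfl, hxy⟩, h0⟩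
          · exact ⟨y, ⟨hxy, le_rfl⟩, h0⟩
      · rcases le_total (G y) 0 with hy0 | hy0
        · exact intermediate_value_Icc' hxy hc ⟨hy0, hx0⟩
        · have : G x = 0 ∨ G y = 0 := by
            have := mul_nonneg hx0 hy0
            exact mul_eq_zero.mp (le_antisymm hle this)
          rcases this with h0 | h0
          · exact ⟨x, ⟨le_rfl, hxy⟩, h0⟩
          · exact ⟨y, ⟨hxy, le_rfl⟩, h0⟩
    obtain ⟨w, hw, hw0⟩ := this
    exact hn w ((hmemZ w).mpr ⟨hsub hw, hw0⟩) hw)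
  have hdeg : q.degree < (N : WithBot ℕ) :=
    lt_of_le_of_lt degree_le_natDegree (by exact_mod_cast lt_of_le_of_lt hd hlt)
  have hint := ho q hdeg
  have hzero := h.eq_zero (f := fun t => s * (q.eval t * G t))
    (continuousOn_const.mul (q.continuous.continuousOn.mul hG))
    (by
      intro x hx
      by_cases hxZ : x ∈ Z
      · simp [((hmemZ x).mp hxZ).2]
      · exact (hq x hx hxZ).le)
    (by rw [integral_const_mul, hint, mul_zero])
  apply h.inf
  refine Z.finite_toSet.subset ?_
  intro x hx
  by_contra hxZ
  exact (ne_of_gt (hq x (h.sub hx) hxZ)) (hzero x hx)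

/-! ### Cauchy transforms -/

lemma sub_ne_of_disj {a b c d x t : ℝ} (hd : Set.Icc a b ∩ Set.Icc c d = ∅)
    (ht : t ∈ Set.Icc a b) (hx : x ∈ Set.Icc c d) : x - t ≠ 0 := by
  intro h0
  have : x = t := sub_eq_zero.mp h0
  subst this
  have hm : x ∈ Set.Icc a b ∩ Set.Icc c d := ⟨ht, hx⟩
  rw [hd] at hm
  exact hm

lemma kernel_cont {a b c d : ℝ} (hd : Set.Icc a b ∩ Set.Icc c d = ∅) {h : ℝ → ℝ}
    (hh : ContinuousOn h (Set.Icc a b)) {x : ℝ} (hx : x ∈ Set.Icc c d) :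
    ContinuousOn (fun t => h t / (x - t)) (Set.Icc a b) :=
  hh.div (by fun_prop) (fun _ ht => sub_ne_of_disj hd ht hx)

lemma kernel_cont₂ {a b c d : ℝ} (hd : Set.Icc a b ∩ Set.Icc c d = ∅) {h g : ℝ → ℝ}
    (hh : ContinuousOn h (Set.Icc a b)) (hg : ContinuousOn g (Set.Icc c d)) :
    ContinuousOn (fun p : ℝ × ℝ => g p.1 * (h p.2 / (p.1 - p.2)))
      (Set.Icc c d ×ˢ Set.Icc a b) := by
  refine ContinuousOn.mul (hg.comp continuousOn_fst fun p hp => hp.1) ?_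
  refine ContinuousOn.div (hh.comp continuousOn_snd fun p hp => hp.2) (by fun_prop) ?_
  intro p hp
  exact sub_ne_of_disj hd hp.2 hp.1

lemma cauchy_cont {μ : Measure ℝ} {a b c d : ℝ} (hμ : Good μ a b)
    (hd : Set.Icc a b ∩ Set.Icc c d = ∅) {h : ℝ → ℝ} (hh : ContinuousOn h (Set.Icc a b)) :
    ContinuousOn (fun x => ∫ t, h t / (x - t) ∂μ) (Set.Icc c d) := by
  have := hμ.fin
  obtain ⟨C, hC⟩ := (isCompact_Icc.prod isCompact_Icc).exists_bound_of_continuousOn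
    (kernel_cont₂ hd hh (continuousOn_const (c := (1 : ℝ))))
  refine continuousOn_of_dominated (bound := fun _ => C) ?_ ?_ (integrable_const C) ?_
  · intro x hx
    exact (hμ.integrable (kernel_cont hd hh hx)).aestronglyMeasurable
  · intro x hx
    filter_upwards [hμ.ae] with t ht
    simpa using hC (x, t) ⟨hx, ht⟩
  · filter_upwards [hμ.ae] with t ht
    exact continuousOn_const.div (by fun_prop) (fun x hx => sub_ne_of_disj hd ht hx)

lemma fubini_kernel {μ ν : Measure ℝ} {a b c d : ℝ} (hμ : Good μ a b) (hν : Good ν c d)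
    (hd : Set.Icc a b ∩ Set.Icc c d = ∅) {h g : ℝ → ℝ}
    (hh : ContinuousOn h (Set.Icc a b)) (hg : ContinuousOn g (Set.Icc c d)) :
    ∫ t, ∫ x, g t * (h x / (t - x)) ∂μ ∂ν = ∫ x, ∫ t, g t * (h x / (t - x)) ∂ν ∂μ := by
  have := hμ.fin
  have := hν.fin
  refine integral_integral_swap ?_
  have h1 : IntegrableOn (fun p : ℝ × ℝ => g p.1 * (h p.2 / (p.1 - p.2)))
      (Set.Icc c d ×ˢ Set.Icc a b) (ν.prod μ) :=
    (kernel_cont₂ hd hh hg).integrableOn_compact (isCompact_Icc.prod isCompact_Icc)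
  rw [IntegrableOn, ← Measure.prod_restrict, hμ.restrict, hν.restrict] at h1
  exact h1

/-! ### Divided differences -/

lemma dd_eval (Z : Finset ℝ) (P : ℝ[X]) (hP : P.degree < (Z.card : WithBot ℕ)) {t : ℝ}
    (ht : t ∉ Z) :
    ∑ x ∈ Z, Lagrange.nodalWeight Z id x * (P.eval x / (t - x))
      = P.eval t / (Lagrange.nodal Z id).eval t := by
  have hne : ∀ i ∈ Z, t ≠ id i := by rintro i hi rfl; exact ht hi
  have h1 := Lagrange.eq_interpolate (s := Z) (v := id) (Set.injOn_id _) hP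
  have h2 := Lagrange.eval_interpolate_not_at_node (s := Z) (v := id)
    (fun i => P.eval (id i)) hne
  rw [← h1] at h2
  rw [eq_div_iff (Lagrange.eval_nodal_not_at_node hne), h2, mul_comm]
  congr 1
  refine Finset.sum_congr rfl fun i _ => ?_
  simp only [id]
  rw [div_eq_mul_inv]; ring

lemma dd_zero (Z : Finset ℝ) (P : ℝ[X]) (hP : P.degree + 1 < (Z.card : WithBot ℕ)) :
    ∑ x ∈ Z, Lagrange.nodalWeight Z id x * P.eval x = 0 := by
  obtain ⟨t, ht⟩ := Infinite.exists_notMem_finset Z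
  have h1 := dd_eval Z (P * (C t - X)) (by
    refine lt_of_le_of_lt (degree_mul_le _ _) (lt_of_le_of_lt ?_ hP)
    gcongr
    refine (degree_sub_le _ _).trans ?_
    rw [degree_X]
    exact max_le (degree_C_le.trans (by norm_num)) le_rfl) ht
  simp only [eval_mul, eval_sub, eval_C, eval_X, sub_self, mul_zero, zero_div] at h1
  rw [← h1]
  refine Finset.sum_congr rfl fun x hx => ?_
  have : t - x ≠ 0 := by
    intro h0
    rw [sub_eq_zero] at h0
    exact ht (h0 ▸ hx)
  field_simp

/-! ### Real Nikishin systems -/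

structure RSys (m : ℕ) (μ : ℕ → Measure ℝ) (e a b : ℕ → ℝ) (w : ℕ → ℕ → ℝ → ℝ) : Prop where
  good : ∀ j ≤ m, Good (μ j) (a j) (b j)
  disj : ∀ j < m, Set.Icc (a j) (b j) ∩ Set.Icc (a (j + 1)) (b (j + 1)) = ∅
  e_ne : ∀ j, e j ≠ 0
  w_self : ∀ j x, w j j x = 1
  w_rec : ∀ j k x, j < k → w j k x = e (j + 1) * ∫ t, w (j + 1) k t / (x - t) ∂(μ (j + 1))

section
variable {m : ℕ} {μ : ℕ → Measure ℝ} {e a b : ℕ → ℝ} {w : ℕ → ℕ → ℝ → ℝ}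

lemma RSys.disj' (S : RSys m μ e a b w) {j : ℕ} (hj : j < m) :
    Set.Icc (a (j + 1)) (b (j + 1)) ∩ Set.Icc (a j) (b j) = ∅ := by
  rw [Set.inter_comm]; exact S.disj j hj

lemma RSys.w_cont (S : RSys m μ e a b w) : ∀ (d j k : ℕ), j + d = k → k ≤ m →
    ContinuousOn (w j k) (Set.Icc (a j) (b j)) := by
  intro d
  induction d with
  | zero =>
    intro j k hjk _
    have : j = k := by omega
    subst this
    have : w j j = fun _ => 1 := funext (S.w_self j)
    rw [this]; exact continuousOn_const
  | succ d ih =>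
    intro j k hjk hk
    have hc := ih (j + 1) k (by omega) hk
    have : w j k = fun x => e (j + 1) * ∫ t, w (j + 1) k t / (x - t) ∂(μ (j + 1)) :=
      funext fun x => S.w_rec j k x (by omega)
    rw [this]
    exact continuousOn_const.mul
      (cauchy_cont (S.good (j + 1) (by omega)) (S.disj' (by omega)) hc)

lemma RSys.w_cont' (S : RSys m μ e a b w) {j k : ℕ} (hjk : j ≤ k) (hk : k ≤ m) :
    ContinuousOn (w j k) (Set.Icc (a j) (b j)) := S.w_cont (k - j) j k (by omega) hk

/-- real linear form -/
def rform (w : ℕ → ℕ → ℝ → ℝ) (m j : ℕ) (p : ℕ → ℝ[X]) (x : ℝ) : ℝ :=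
  ∑ k ∈ Finset.Icc j m, (p k).eval x * w j k x

lemma RSys.rform_cont (S : RSys m μ e a b w) (j : ℕ) (p : ℕ → ℝ[X]) :
    ContinuousOn (rform w m j p) (Set.Icc (a j) (b j)) := by
  unfold rform
  refine continuousOn_finsetSum _ fun k hk => ?_
  rw [Finset.mem_Icc] at hk
  exact (p k).continuous.continuousOn.mul (S.w_cont' hk.1 hk.2)

lemma nodal_ne {a b c d : ℝ} (hd : Set.Icc a b ∩ Set.Icc c d = ∅) {Z : Finset ℝ}
    (hZ : ∀ z ∈ Z, z ∈ Set.Icc c d) {t : ℝ} (ht : t ∈ Set.Icc a b) :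
    t ∉ Z ∧ (Lagrange.nodal Z id).eval t ≠ 0 := by
  have h1 : t ∉ Z := fun h => sub_ne_of_disj hd ht (hZ t h) (sub_self t)
  refine ⟨h1, Lagrange.eval_nodal_not_at_node ?_⟩
  rintro i hi rfl
  exact h1 hi

lemma degree_mul_lt' {p q : ℝ[X]} {A B : ℕ} (hp : p.degree < (A : WithBot ℕ))
    (hq : q.degree < (B : WithBot ℕ)) : (p * q).degree + 1 < ((A + B : ℕ) : WithBot ℕ) := by
  by_cases hp0 : p = 0
  · subst hp0; simp
  by_cases hq0 : q = 0
  · subst hq0; simp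
  rw [degree_mul, degree_eq_natDegree hp0, degree_eq_natDegree hq0]
  rw [degree_eq_natDegree hp0] at hp
  rw [degree_eq_natDegree hq0] at hq
  norm_cast at *
  omega

lemma RSys.tsystem (S : RSys m μ e a b w) (n : ℕ → ℕ) (hn : Decr m n) (p : ℕ → ℝ[X])
    (hp : ∀ j ≤ m, (p j).degree < (n j : WithBot ℕ)) : ∀ (d j : ℕ), j + d = m →
    ∀ Z : Finset ℝ, (∀ z ∈ Z, z ∈ Set.Icc (a j) (b j) ∧ rform w m j p z = 0) →
    tailSum m n j ≤ Z.card → ∀ k, j ≤ k → k ≤ m → p k = 0 := by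
  have hmono : ∀ j k, j ≤ k → k ≤ m → n k ≤ n j := by
    intro j k hjk
    induction k, hjk using Nat.le_induction with
    | base => intro _; exact le_rfl
    | succ k _ ih => intro hk; exact (hn k (by omega)).trans (ih (by omega))
  have hfinal : ∀ j ≤ m, ∀ Z : Finset ℝ, (∀ z ∈ Z, rform w m j p z = 0) →
      n j ≤ Z.card → (∀ k, j < k → k ≤ m → p k = 0) → ∀ k, j ≤ k → k ≤ m → p k = 0 := by
    intro j hj Z hZ hc hk0 k hjk hkm
    rcases hjk.lt_or_eq with hlt | rfl
    · exact hk0 k hlt hkm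
    · refine Polynomial.eq_zero_of_degree_lt_of_eval_finset_eq_zero Z
        ((hp j hj).trans_le (by exact_mod_cast hc)) ?_
      intro z hz
      have h1 := hZ z hz
      unfold rform at h1
      rw [Finset.sum_eq_single_of_mem j (Finset.mem_Icc.mpr ⟨le_rfl, hj⟩)] at h1
      · simpa [S.w_self] using h1
      · intro k hk hne
        rw [Finset.mem_Icc] at hk
        rw [hk0 k (by omega) hk.2]; simp
  intro d
  induction d with
  | zero =>
    intro j hj Z hZ hc
    have : j = m := by omega
    subst this
    refine hfinal j le_rfl Z (fun z hz => (hZ z hz).2) ?_ ?_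
    · simpa [tailSum] using hc
    · intro k h1 h2; omega
  | succ d ih =>
    intro j hj Z hZ hc
    have hjm : j < m := by omega
    have hsplit : Finset.Icc j m = insert j (Finset.Icc (j + 1) m) := by
      ext k; simp only [Finset.mem_Icc, Finset.mem_insert]; omega
    have hnotin : j ∉ Finset.Icc (j + 1) m := by simp
    have htail : tailSum m n j = n j + tailSum m n (j + 1) := by
      unfold tailSum; rw [hsplit, Finset.sum_insert hnotin]
    have hG := S.good (j + 1) hjm
    have hd := S.disj' hjm
    have hZ' : ∀ z ∈ Z, z ∈ Set.Icc (a j) (b j) := fun z hz => (hZ z hz).1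
    set W := Lagrange.nodal Z id with hW
    have hcontW : ContinuousOn (fun t => rform w m (j + 1) p t / W.eval t)
        (Set.Icc (a (j + 1)) (b (j + 1))) :=
      (S.rform_cont (j + 1) p).div W.continuous.continuousOn
        (fun t ht => (nodal_ne hd hZ' ht).2)
    obtain ⟨Z2, hZ2, hc2⟩ := zeros_of_orth hG hcontW (tailSum m n (j + 1)) (by
      intro q hq
      have h0 : ∑ x ∈ Z, Lagrange.nodalWeight Z id x * (q.eval x * rform w m j p x) = 0 :=
        Finset.sum_eq_zero fun x hx => by rw [(hZ x hx).2]; ring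
      have hdegk : ∀ k, j ≤ k → k ≤ m → (q * p k).degree + 1 < (Z.card : WithBot ℕ) := by
        intro k hjk hkm
        refine (degree_mul_lt' hq (hp k hkm)).trans_le ?_
        have := hmono j k hjk hkm
        norm_cast; omega
      have hterm : ∀ k ∈ Finset.Icc (j + 1) m,
          ∑ x ∈ Z, Lagrange.nodalWeight Z id x * (q.eval x * ((p k).eval x * w j k x))
          = - (e (j + 1) * ∫ t, q.eval t * ((p k).eval t * w (j + 1) k t / W.eval t)
              ∂(μ (j + 1))) := by
        intro k hk
        rw [Finset.mem_Icc] at hk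
        have hwc := S.w_cont' hk.1 hk.2
        have e1 : ∀ x ∈ Z, Lagrange.nodalWeight Z id x * (q.eval x * ((p k).eval x * w j k x))
            = ∫ t, e (j + 1) * (Lagrange.nodalWeight Z id x * ((q * p k).eval x) *
              (w (j + 1) k t / (x - t))) ∂(μ (j + 1)) := by
          intro x hx
          rw [S.w_rec j k x (by omega), integral_const_mul, integral_const_mul, eval_mul]
          ring
        rw [Finset.sum_congr rfl e1, ← integral_finsetSum, ← integral_const_mul,
          ← integral_neg]
        · refine integral_congr_ae ?_
          filter_upwards [hG.ae] with t ht
          have h2 := dd_eval Z (q * p k) (lt_of_le_of_lt (by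
            exact le_add_of_nonneg_right (by norm_num)) (hdegk k (by omega) hk.2))
            (nodal_ne hd hZ' ht).1
          have h3 : q.eval t * ((p k).eval t * w (j + 1) k t / W.eval t)
              = w (j + 1) k t * ((q * p k).eval t / W.eval t) := by
            rw [eval_mul]; ring
          rw [h3, ← h2, Finset.mul_sum, Finset.mul_sum, ← Finset.sum_neg_distrib]
          refine Finset.sum_congr rfl fun x hx => ?_
          rw [← neg_sub x t, div_neg]
          ring
        · intro x hx
          exact ((hG.integrable (kernel_cont hd hwc (hZ' x hx))).const_mul _).const_mul _
      have h4 : ∑ x ∈ Z, Lagrange.nodalWeight Z id x * (q.eval x * rform w m j p x)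
          = ∑ k ∈ Finset.Icc j m,
          ∑ x ∈ Z, Lagrange.nodalWeight Z id x * (q.eval x * ((p k).eval x * w j k x)) := by
        rw [Finset.sum_comm]
        refine Finset.sum_congr rfl fun x _ => ?_
        rw [rform, Finset.mul_sum, Finset.mul_sum]
      rw [h4, hsplit, Finset.sum_insert hnotin, Finset.sum_congr rfl hterm] at h0
      have h5 : ∑ x ∈ Z, Lagrange.nodalWeight Z id x * (q.eval x * ((p j).eval x * w j j x))
          = 0 := by
        rw [← dd_zero Z (q * p j) (hdegk j le_rfl hjm.le)]
        refine Finset.sum_congr rfl fun x _ => ?_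
        rw [S.w_self, eval_mul]; ring
      rw [h5, zero_add, Finset.sum_neg_distrib, neg_eq_zero, ← Finset.mul_sum,
        ← integral_finsetSum] at h0
      · rcases mul_eq_zero.mp h0 with h6 | h6
        · exact absurd h6 (S.e_ne _)
        · rw [← h6]
          congr 1
          ext t
          rw [rform, ← Finset.mul_sum, Finset.sum_div]
      · intro k hk
        rw [Finset.mem_Icc] at hk
        refine hG.integrable (q.continuous.continuousOn.mul ?_)
        exact ((p k).continuous.continuousOn.mul (S.w_cont' hk.1 hk.2)).div
          W.continuous.continuousOn (fun t ht => (nodal_ne hd hZ' ht).2))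
    have hk0 := ih (j + 1) (by omega) Z2 (by
      intro z hz
      refine ⟨(hZ2 z hz).1, ?_⟩
      rcases div_eq_zero_iff.mp (hZ2 z hz).2 with h | h
      · exact h
      · exact absurd h (nodal_ne hd hZ' (hZ2 z hz).1).2) hc2.ge
    exact hfinal j hjm.le Z (fun z hz => (hZ z hz).2) (by omega)
      (fun k h1 h2 => hk0 k h1 h2)

lemma RSys.backward (S : RSys m μ e a b w) (n : ℕ → ℕ) (hn : Decr m n) : ∀ (d j : ℕ),
    j + d = m → ∀ F : ℝ → ℝ, ContinuousOn F (Set.Icc (a j) (b j)) →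
    (∀ k, j ≤ k → k ≤ m → ∀ ν < n k, ∫ x, x ^ ν * F x * w j k x ∂(μ j) = 0) →
    ∃ Z : Finset ℝ, (∀ z ∈ Z, z ∈ Set.Icc (a j) (b j) ∧ F z = 0) ∧ Z.card = tailSum m n j := by
  have hmono : ∀ j k, j ≤ k → k ≤ m → n k ≤ n j := by
    intro j k hjk
    induction k, hjk using Nat.le_induction with
    | base => intro _; exact le_rfl
    | succ k _ ih => intro hk; exact (hn k (by omega)).trans (ih (by omega))
  have hpoly : ∀ j ≤ m, ∀ F : ℝ → ℝ, ContinuousOn F (Set.Icc (a j) (b j)) →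
      (∀ ν < n j, ∫ x, x ^ ν * F x * w j j x ∂(μ j) = 0) →
      ∀ q : ℝ[X], q.degree < (n j : WithBot ℕ) → ∫ x, q.eval x * F x ∂(μ j) = 0 := by
    intro j hj F hF ho q hq
    have h1 : ∀ x, q.eval x * F x = ∑ i ∈ Finset.range (n j), q.coeff i * (x ^ i * F x) := by
      intro x
      by_cases hq0 : q = 0
      · simp [hq0]
      rw [eval_eq_sum_range' (n := n j) (by
        rwa [natDegree_lt_iff_degree_lt hq0]), Finset.sum_mul]
      refine Finset.sum_congr rfl fun i _ => by ring
    simp_rw [h1]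
    rw [integral_finsetSum]
    · refine Finset.sum_eq_zero fun i hi => ?_
      rw [integral_const_mul]
      have := ho i (Finset.mem_range.mp hi)
      simp only [S.w_self, mul_one] at this
      rw [this, mul_zero]
    · intro i _
      exact ((S.good j hj).integrable ((by fun_prop : Continuous fun x : ℝ => x ^ i).continuousOn.mul hF)).const_mul _
  intro d
  induction d with
  | zero =>
    intro j hj F hF ho
    have : j = m := by omega
    subst this
    have : tailSum j n j = n j := by simp [tailSum]
    rw [this]
    exact zeros_of_orth (S.good j le_rfl) hF (n j)
      (hpoly j le_rfl F hF (ho j le_rfl le_rfl))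
  | succ d ih =>
    intro j hj F hF ho
    have hjm : j < m := by omega
    have hsplit : Finset.Icc j m = insert j (Finset.Icc (j + 1) m) := by
      ext k; simp only [Finset.mem_Icc, Finset.mem_insert]; omega
    have hnotin : j ∉ Finset.Icc (j + 1) m := by simp
    have htail : tailSum m n j = n j + tailSum m n (j + 1) := by
      unfold tailSum; rw [hsplit, Finset.sum_insert hnotin]
    have hG := S.good (j + 1) hjm
    have hGj := S.good j hjm.le
    have hd := S.disj' hjm
    have hd' := S.disj j hjm
    have hPj := hpoly j hjm.le F hF (ho j le_rfl hjm.le)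
    have hF'c := cauchy_cont hGj hd' hF
    obtain ⟨Z, hZ, hc⟩ := ih (j + 1) (by omega) (fun t => ∫ x, F x / (t - x) ∂(μ j)) hF'c (by
      intro k hjk hkm ν hν
      have hwc := S.w_cont' hjk hkm
      have hgc : ∀ i : ℕ, ContinuousOn (fun t => t ^ i * w (j + 1) k t)
          (Set.Icc (a (j + 1)) (b (j + 1))) := fun i =>
        (by fun_prop : Continuous fun x : ℝ => x ^ i).continuousOn.mul hwc
      have s1 : ∫ t, t ^ ν * (∫ x, F x / (t - x) ∂(μ j)) * w (j + 1) k t ∂(μ (j + 1))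
          = ∫ t, ∫ x, (t ^ ν * w (j + 1) k t) * (F x / (t - x)) ∂(μ j) ∂(μ (j + 1)) := by
        congr 1; ext t; rw [integral_const_mul]; ring
      rw [s1, fubini_kernel hGj hG hd' hF (hgc ν)]
      -- the inner integral
      set M : ℕ → ℝ := fun i => ∫ t, t ^ i * w (j + 1) k t ∂(μ (j + 1)) with hM
      have s2 : ∀ x ∈ Set.Icc (a j) (b j),
          ∫ t, (t ^ ν * w (j + 1) k t) * (F x / (t - x)) ∂(μ (j + 1))
          = (∑ i ∈ Finset.range ν, M i * (x ^ (ν - 1 - i) * F x))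
            + (-(e (j + 1))⁻¹) * (x ^ ν * F x * w j k x) := by
        intro x hx
        have p1 : ∀ t ∈ Set.Icc (a (j + 1)) (b (j + 1)),
            (t ^ ν * w (j + 1) k t) * (F x / (t - x))
            = (∑ i ∈ Finset.range ν, (x ^ (ν - 1 - i) * F x) * (t ^ i * w (j + 1) k t))
              + (-(x ^ ν * F x)) * (w (j + 1) k t / (x - t)) := by
          intro t ht
          have hne : t - x ≠ 0 := sub_ne_of_disj hd' hx ht
          have hne' : x - t ≠ 0 := sub_ne_of_disj hd ht hx
          have hg := (Commute.all t x).geom_sum₂_mul ν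
          have e1 : t ^ ν = (∑ i ∈ Finset.range ν, t ^ i * x ^ (ν - 1 - i)) * (t - x) + x ^ ν := by
            rw [hg]; ring
          have e2 : ∑ i ∈ Finset.range ν, (x ^ (ν - 1 - i) * F x) * (t ^ i * w (j + 1) k t)
              = (∑ i ∈ Finset.range ν, t ^ i * x ^ (ν - 1 - i)) * (F x * w (j + 1) k t) := by
            rw [Finset.sum_mul]; refine Finset.sum_congr rfl fun i _ => by ring
          rw [e2, e1, ← neg_sub t x, div_neg]
          field_simp
        have p2 : ∫ t, (t ^ ν * w (j + 1) k t) * (F x / (t - x)) ∂(μ (j + 1))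
            = ∫ t, ((∑ i ∈ Finset.range ν, (x ^ (ν - 1 - i) * F x) * (t ^ i * w (j + 1) k t))
              + (-(x ^ ν * F x)) * (w (j + 1) k t / (x - t))) ∂(μ (j + 1)) := by
          refine integral_congr_ae ?_
          filter_upwards [hG.ae] with t ht using p1 t ht
        have hint : ∀ i ∈ Finset.range ν, Integrable
            (fun t => (x ^ (ν - 1 - i) * F x) * (t ^ i * w (j + 1) k t)) (μ (j + 1)) :=
          fun i _ => (hG.integrable (hgc i)).const_mul _
        rw [p2, integral_add (integrable_finsetSum _ hint)
          ((hG.integrable (kernel_cont hd hwc hx)).const_mul _), integral_finsetSum _ hint,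
          integral_const_mul, S.w_rec j k x (by omega)]
        congr 1
        · refine Finset.sum_congr rfl fun i _ => ?_
          rw [integral_const_mul, hM]; ring
        · have := S.e_ne (j + 1)
          field_simp
      have s3 : ∫ x, ∫ t, (t ^ ν * w (j + 1) k t) * (F x / (t - x)) ∂(μ (j + 1)) ∂(μ j)
          = ∫ x, ((∑ i ∈ Finset.range ν, M i * (x ^ (ν - 1 - i) * F x))
            + (-(e (j + 1))⁻¹) * (x ^ ν * F x * w j k x)) ∂(μ j) := by
        refine integral_congr_ae ?_
        filter_upwards [hGj.ae] with x hx using s2 x hx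
      have hxF : ∀ i : ℕ, ContinuousOn (fun x => x ^ i * F x) (Set.Icc (a j) (b j)) := fun i =>
        (by fun_prop : Continuous fun x : ℝ => x ^ i).continuousOn.mul hF
      have hint : ∀ i ∈ Finset.range ν, Integrable
          (fun x => M i * (x ^ (ν - 1 - i) * F x)) (μ j) :=
        fun i _ => (hGj.integrable (hxF _)).const_mul _
      have hint2 : Integrable (fun x => x ^ ν * F x * w j k x) (μ j) :=
        hGj.integrable ((hxF ν).mul (S.w_cont' (by omega) hkm))
      rw [s3, integral_add (integrable_finsetSum _ hint) (hint2.const_mul _),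
        integral_finsetSum _ hint, integral_const_mul, ho k (by omega) hkm ν hν, mul_zero,
        add_zero]
      refine Finset.sum_eq_zero fun i hi => ?_
      have hlt := Finset.mem_range.mp hi
      have h1 := ho j le_rfl hjm.le (ν - 1 - i) (by
        have := hmono j k (by omega) hkm
        omega)
      simp only [S.w_self, mul_one] at h1
      rw [integral_const_mul, h1, mul_zero])
    have hZ' : ∀ z ∈ Z, z ∈ Set.Icc (a (j + 1)) (b (j + 1)) := fun z hz => (hZ z hz).1
    set W := Lagrange.nodal Z id with hW
    have hWm : W.Monic := Lagrange.nodal_monic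
    have hWne : ∀ t ∈ Set.Icc (a j) (b j), W.eval t ≠ 0 := fun t ht => (nodal_ne hd' hZ' ht).2
    have hFW : ContinuousOn (fun t => F t / W.eval t) (Set.Icc (a j) (b j)) :=
      hF.div W.continuous.continuousOn hWne
    obtain ⟨Z2, hZ2, hc2⟩ := zeros_of_orth hGj hFW (tailSum m n j) (by
      intro q hq
      have hWdeg : W.degree = (tailSum m n (j + 1) : WithBot ℕ) := by
        rw [hW, Lagrange.degree_nodal, hc]
      have hrdeg : (q %ₘ W).degree < (Z.card : WithBot ℕ) := by
        rw [hc, ← hWdeg]; exact degree_modByMonic_lt q hWm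
      have hq1 : (q /ₘ W).degree < (n j : WithBot ℕ) := by
        by_cases h0 : q /ₘ W = 0
        · rw [h0, degree_zero]; exact WithBot.bot_lt_coe _
        have hle : W.degree ≤ q.degree := by
          by_contra hlt
          exact h0 ((divByMonic_eq_zero_iff hWm).mpr (not_le.mp hlt))
        have := degree_add_divByMonic hWm hle
        rw [← this, hWdeg, degree_eq_natDegree h0, htail] at hq
        rw [degree_eq_natDegree h0]
        norm_cast at *
        omega
      have hdecomp : ∀ t ∈ Set.Icc (a j) (b j), q.eval t * (F t / W.eval t)
          = (q /ₘ W).eval t * F t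
            + ∑ z ∈ Z, (-(Lagrange.nodalWeight Z id z * (q %ₘ W).eval z)) * (F t / (z - t)) := by
        intro t ht
        have h1 := dd_eval Z (q %ₘ W) hrdeg (nodal_ne hd' hZ' ht).1
        have h2 : ∑ z ∈ Z, (-(Lagrange.nodalWeight Z id z * (q %ₘ W).eval z)) * (F t / (z - t))
            = F t * ((q %ₘ W).eval t / W.eval t) := by
          rw [← h1, Finset.mul_sum]
          refine Finset.sum_congr rfl fun z _ => ?_
          rw [← neg_sub z t, div_neg]; ring
        have h3 : q.eval t = (q %ₘ W).eval t + W.eval t * (q /ₘ W).eval t := by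
          rw [← eval_mul, ← eval_add, modByMonic_add_div]
        rw [h2, h3]
        have := hWne t ht
        field_simp
        ring
      have hint : ∀ z ∈ Z, Integrable (fun t =>
          (-(Lagrange.nodalWeight Z id z * (q %ₘ W).eval z)) * (F t / (z - t))) (μ j) :=
        fun z hz => (hGj.integrable (kernel_cont hd' hF (hZ' z hz))).const_mul _
      have s1 : ∫ t, q.eval t * (F t / W.eval t) ∂(μ j) = ∫ t, ((q /ₘ W).eval t * F t
            + ∑ z ∈ Z, (-(Lagrange.nodalWeight Z id z * (q %ₘ W).eval z)) * (F t / (z - t)))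
            ∂(μ j) := by
        refine integral_congr_ae ?_
        filter_upwards [hGj.ae] with x hx using hdecomp x hx
      have hint2 : Integrable (fun t => (q /ₘ W).eval t * F t) (μ j) :=
        hGj.integrable ((q /ₘ W).continuous.continuousOn.mul hF)
      rw [s1, integral_add hint2 (integrable_finsetSum _ hint), hPj _ hq1, integral_finsetSum _ hint, zero_add]
      refine Finset.sum_eq_zero fun z hz => ?_
      rw [integral_const_mul, (hZ z hz).2, mul_zero])
    refine ⟨Z2, ?_, hc2⟩
    intro z hz
    refine ⟨(hZ2 z hz).1, ?_⟩
    rcases div_eq_zero_iff.mp (hZ2 z hz).2 with h | h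
    · exact h
    · exact absurd h (hWne z (hZ2 z hz).1)

end

/-! ### Realification of the frozen objects -/

def rnik (μ : ℕ → Measure ℝ) (e : ℕ → ℝ) : ℕ → ℕ → ℝ → ℝ
  | j, 0, x => e j * ∫ t, 1 / (x - t) ∂(μ j)
  | j, g + 1, x => e j * ∫ t, rnik μ e (j + 1) g t / (x - t) ∂(μ j)

def rwt (μ : ℕ → Measure ℝ) (e : ℕ → ℝ) (j k : ℕ) (x : ℝ) : ℝ :=
  if j < k then rnik μ e (j + 1) (k - (j + 1)) x else 1

lemma nikhat_real (μ : ℕ → Measure ℝ) (e : ℕ → ℝ) (g : ℕ) : ∀ (j : ℕ) (x : ℝ),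
    nikhat μ e j g (x : ℂ) = (rnik μ e j g x : ℂ) := by
  induction g with
  | zero =>
    intro j x
    rw [nikhat, rnik, Complex.ofReal_mul, ← integral_complex_ofReal]
    congr 2; ext t; push_cast; rfl
  | succ g ih =>
    intro j x
    rw [nikhat, rnik, Complex.ofReal_mul, ← integral_complex_ofReal]
    congr 2; ext t; rw [ih]; push_cast; rfl

lemma wt_real (μ : ℕ → Measure ℝ) (e : ℕ → ℝ) (j k : ℕ) (x : ℝ) :
    wt μ e j k (x : ℂ) = (rwt μ e j k x : ℂ) := by
  unfold wt rwt
  split_ifs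
  · exact nikhat_real μ e _ _ x
  · simp

lemma linForm_real (μ : ℕ → Measure ℝ) (e : ℕ → ℝ) (m j : ℕ) (A : ℕ → ℝ[X]) (x : ℝ) :
    linForm μ e m j A (x : ℂ) = (rform (rwt μ e) m j A x : ℂ) := by
  unfold linForm rform
  push_cast
  refine Finset.sum_congr rfl fun k _ => ?_
  rw [wt_real]
  congr 1
  have := Polynomial.aeval_algebraMap_apply ℂ x (A k)
  simpa using this

lemma NikSys.toR {m : ℕ} (S : NikSys m) : RSys m S.μ S.e S.a S.b (rwt S.μ S.e) where
  good := fun j hj => ⟨S.fin j, S.inf j hj, by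
    rw [← S.hull j hj]; exact subset_convexHull ℝ _⟩
  disj := S.disj
  e_ne := by
    intro j
    rcases S.sgn j with h | h <;> rw [h] <;> norm_num
  w_self := by intro j x; simp [rwt]
  w_rec := by
    intro j k x hjk
    have h1 : rwt S.μ S.e j k x = rnik S.μ S.e (j + 1) (k - (j + 1)) x := by simp [rwt, hjk]
    rw [h1]
    obtain ⟨g, rfl⟩ : ∃ g, k = j + 1 + g := ⟨k - (j + 1), by omega⟩
    rw [Nat.add_sub_cancel_left]
    cases g with
    | zero => simp [rnik, rwt]
    | succ g =>
      rw [rnik]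
      congr 2
      ext t
      have h2 : j + 1 < j + 1 + (g + 1) := by omega
      have h3 : j + 1 + (g + 1) - (j + 1 + 1) = g := by omega
      simp only [rwt, h2, if_true, h3]

/-- real orthogonality functional -/
def O {m₁ m₂ : ℕ} (S1 : NikSys m₁) (S2 : NikSys m₂) (A : ℕ → ℝ[X]) (k ν : ℕ) : ℝ :=
  ∫ x, x ^ ν * rform (rwt S1.μ S1.e) m₁ 0 A x * rwt S2.μ S2.e 0 k x ∂(S2.μ 0)

lemma msum_eq (m : ℕ) (n : ℕ → ℕ) : msum m n = tailSum m n 0 := by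
  unfold msum tailSum
  refine Finset.sum_congr ?_ fun _ _ => rfl
  ext k; simp only [Finset.mem_range, Finset.mem_Icc]; omega

lemma rform_cont0 {m₁ m₂ : ℕ} (S1 : NikSys m₁) (S2 : NikSys m₂) (hbase : S1.μ 0 = S2.μ 0)
    (A : ℕ → ℝ[X]) :
    ContinuousOn (rform (rwt S1.μ S1.e) m₁ 0 A) (Set.Icc (S2.a 0) (S2.b 0)) := by
  rw [← S2.hull 0 (Nat.zero_le _), ← hbase, S1.hull 0 (Nat.zero_le _)]
  exact S1.toR.rform_cont 0 A

lemma normal {m₁ m₂ : ℕ} (S1 : NikSys m₁) (S2 : NikSys m₂) (hbase : S1.μ 0 = S2.μ 0)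
    (n1 n2 : ℕ → ℕ) (h1 : Decr m₁ n1) (h2 : Decr m₂ n2) (hle : msum m₁ n1 ≤ msum m₂ n2)
    (A : ℕ → ℝ[X]) (hdeg : ∀ j ≤ m₁, (A j).degree < (n1 j : WithBot ℕ))
    (ho : ∀ k ≤ m₂, ∀ ν < n2 k, O S1 S2 A k ν = 0) : ∀ j ≤ m₁, A j = 0 := by
  obtain ⟨Z, hZ, hc⟩ := S2.toR.backward n2 h2 m₂ 0 (by omega) _ (rform_cont0 S1 S2 hbase A)
    (fun k _ hk ν hν => ho k hk ν hν)
  have hI : Set.Icc (S2.a 0) (S2.b 0) = Set.Icc (S1.a 0) (S1.b 0) := by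
    rw [← S2.hull 0 (Nat.zero_le _), ← hbase, S1.hull 0 (Nat.zero_le _)]
  rw [hI] at hZ
  rw [msum_eq, msum_eq] at hle
  intro j hj
  exact S1.toR.tsystem n1 h1 A hdeg m₁ 0 (by omega) Z hZ (by omega) j (Nat.zero_le _) hj

lemma sInt_real {m₁ m₂ : ℕ} (S1 : NikSys m₁) (S2 : NikSys m₂) (A : ℕ → ℝ[X]) (k ν : ℕ)
    (h : sInt S2.μ S2.e 0 k
      (fun x => (x : ℂ) ^ ν * linForm S1.μ S1.e m₁ 0 A (x : ℂ)) = 0) : O S1 S2 A k ν = 0 := by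
  unfold sInt at h
  have h1 : ∫ x : ℝ, (x : ℂ) ^ ν * linForm S1.μ S1.e m₁ 0 A (x : ℂ) * wt S2.μ S2.e 0 k (x : ℂ)
      ∂(S2.μ 0) = ((O S1 S2 A k ν : ℝ) : ℂ) := by
    unfold O
    rw [← integral_complex_ofReal]
    congr 1; ext x; rw [linForm_real, wt_real]; push_cast; rfl
  rw [h1] at h
  rcases mul_eq_zero.mp h with h2 | h2
  · exact absurd (by exact_mod_cast h2) (S2.toR.e_ne 0)
  · exact_mod_cast h2

lemma pairing {m₁ m₂ : ℕ} (S1 : NikSys m₁) (S2 : NikSys m₂) (hbase : S1.μ 0 = S2.μ 0)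
    (A B : ℕ → ℝ[X]) :
    ∫ x, rform (rwt S2.μ S2.e) m₂ 0 B x * rform (rwt S1.μ S1.e) m₁ 0 A x ∂(S2.μ 0)
      = ∑ k ∈ Finset.Icc 0 m₂, ∑ i ∈ Finset.range ((B k).natDegree + 1),
        (B k).coeff i * O S1 S2 A k i := by
  have hA := rform_cont0 S1 S2 hbase A
  have hG := S2.toR.good 0 (Nat.zero_le _)
  have e1 : ∀ x, rform (rwt S2.μ S2.e) m₂ 0 B x * rform (rwt S1.μ S1.e) m₁ 0 A x
      = ∑ k ∈ Finset.Icc 0 m₂, ∑ i ∈ Finset.range ((B k).natDegree + 1), (B k).coeff i *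
        (x ^ i * rform (rwt S1.μ S1.e) m₁ 0 A x * rwt S2.μ S2.e 0 k x) := by
    intro x
    conv_lhs => rw [rform, Finset.sum_mul]
    refine Finset.sum_congr rfl fun k _ => ?_
    rw [eval_eq_sum_range, Finset.sum_mul, Finset.sum_mul]
    refine Finset.sum_congr rfl fun i _ => by ring
  have hint : ∀ k ∈ Finset.Icc 0 m₂, ∀ i ∈ Finset.range ((B k).natDegree + 1),
      Integrable (fun x => (B k).coeff i *
        (x ^ i * rform (rwt S1.μ S1.e) m₁ 0 A x * rwt S2.μ S2.e 0 k x)) (S2.μ 0) := by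
    intro k hk i _
    rw [Finset.mem_Icc] at hk
    refine Integrable.const_mul ?_ _
    exact hG.integrable
      (((by fun_prop : Continuous fun x : ℝ => x ^ i).continuousOn.mul hA).mul
        (S2.toR.w_cont' hk.1 hk.2))
  simp_rw [e1]
  rw [integral_finsetSum _ fun k hk => integrable_finsetSum _ (hint k hk)]
  refine Finset.sum_congr rfl fun k hk => ?_
  rw [integral_finsetSum _ (hint k hk)]
  refine Finset.sum_congr rfl fun i _ => ?_
  rw [integral_const_mul, O]

lemma coeff_zero_of_deg {p : ℝ[X]} {N i : ℕ} (h : p.degree < (N : WithBot ℕ)) (hi : N ≤ i) :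
    p.coeff i = 0 :=
  coeff_eq_zero_of_degree_lt (h.trans_le (by exact_mod_cast hi))

lemma pairing_zero {m₁ m₂ : ℕ} (S1 : NikSys m₁) (S2 : NikSys m₂) (hbase : S1.μ 0 = S2.μ 0)
    (A B : ℕ → ℝ[X]) (n2 : ℕ → ℕ) (hB : ∀ k ≤ m₂, (B k).degree < (n2 k : WithBot ℕ))
    (ho : ∀ k ≤ m₂, ∀ ν < n2 k, O S1 S2 A k ν = 0) :
    ∫ x, rform (rwt S2.μ S2.e) m₂ 0 B x * rform (rwt S1.μ S1.e) m₁ 0 A x ∂(S2.μ 0) = 0 := by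
  rw [pairing S1 S2 hbase]
  refine Finset.sum_eq_zero fun k hk => Finset.sum_eq_zero fun i _ => ?_
  rw [Finset.mem_Icc] at hk
  by_cases hi : i < n2 k
  · rw [ho k hk.2 i hi, mul_zero]
  · rw [coeff_zero_of_deg (hB k hk.2) (by omega), zero_mul]

lemma exists_bump (m : ℕ) (n n' : ℕ → ℕ) (hle : ∀ j, n j ≤ n' j)
    (hs : msum m n' = msum m n + 1) :
    ∃ l ≤ m, n' l = n l + 1 ∧ ∀ k ≤ m, k ≠ l → n' k = n k := by
  unfold msum at hs
  obtain ⟨l, hl, hlt⟩ : ∃ l ∈ Finset.range (m + 1), n l < n' l :=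
    Finset.exists_lt_of_sum_lt (by omega)
  rw [← Finset.add_sum_erase _ n hl, ← Finset.add_sum_erase _ n' hl] at hs
  have hle' : ∑ k ∈ (Finset.range (m + 1)).erase l, n k
      ≤ ∑ k ∈ (Finset.range (m + 1)).erase l, n' k := Finset.sum_le_sum fun k _ => hle k
  have heq := (Finset.sum_eq_sum_iff_of_le (s := (Finset.range (m + 1)).erase l)
    (f := n) (g := n') fun k _ => hle k).mp (by omega)
  refine ⟨l, by simpa [Nat.lt_succ_iff] using hl, by omega, ?_⟩
  intro k hk hne
  exact (heq k (Finset.mem_erase.mpr ⟨hne, Finset.mem_range.mpr (by omega)⟩)).symm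

/-- **Bi-orthogonality.**  Let `𝔄_n` be the monic mixed type forms for
`(n₁(n); n₂(n-1))` and `(S¹,S²)`, and `𝔅_n` those for `(n₂(n); n₁(n-1))` and
`(S²,S¹)`.  Then `∫ 𝔅_{n'} 𝔄_n dσ²_0 = 0` for `n ≠ n'` and `≠ 0` for `n = n'`. -/
theorem biorthogonality
    (m₁ m₂ : ℕ) (S1 : NikSys m₁) (S2 : NikSys m₂)
    (hbase : S1.μ 0 = S2.μ 0 ∧ S1.e 0 = S2.e 0)
    (I₁ I₂ : ℕ → (ℕ → ℕ))
    (hI₁ : CompleteOrdered m₁ I₁) (hI₂ : CompleteOrdered m₂ I₂)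
    (A B : ℕ → (ℕ → Polynomial ℝ))
    (hA : ∀ n, 1 ≤ n →
      IsMOP m₁ m₂ S1 S2 (I₁ n) (I₂ (n - 1)) (A n) ∧ MonicLast m₁ (A n))
    (hB : ∀ n, 1 ≤ n →
      IsMOP m₂ m₁ S2 S1 (I₂ n) (I₁ (n - 1)) (B n) ∧ MonicLast m₂ (B n)) :
    ∀ n n', 1 ≤ n → 1 ≤ n' →
      (n ≠ n' →
        (S2.e 0 : ℂ) * ∫ x, linForm S2.μ S2.e m₂ 0 (B n') (x : ℂ) *
          linForm S1.μ S1.e m₁ 0 (A n) (x : ℂ) ∂(S2.μ 0) = 0) ∧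
      (S2.e 0 : ℂ) * ∫ x, linForm S2.μ S2.e m₂ 0 (B n) (x : ℂ) *
        linForm S1.μ S1.e m₁ 0 (A n) (x : ℂ) ∂(S2.μ 0) ≠ 0 := by
  obtain ⟨hb, -⟩ := hbase
  have hAo : ∀ n, 1 ≤ n → ∀ k ≤ m₂, ∀ ν < I₂ (n - 1) k, O S1 S2 (A n) k ν = 0 :=
    fun n hn k hk ν hν => sInt_real S1 S2 (A n) k ν ((hA n hn).1.2.2 k hk ν hν)
  have hBo : ∀ n, 1 ≤ n → ∀ k ≤ m₁, ∀ ν < I₁ (n - 1) k, O S2 S1 (B n) k ν = 0 :=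
    fun n hn k hk ν hν => sInt_real S2 S1 (B n) k ν ((hB n hn).1.2.2 k hk ν hν)
  have hreal : ∀ n n', ∫ x : ℝ, linForm S2.μ S2.e m₂ 0 (B n') (x : ℂ) *
          linForm S1.μ S1.e m₁ 0 (A n) (x : ℂ) ∂(S2.μ 0) =
      ((∫ x, rform (rwt S2.μ S2.e) m₂ 0 (B n') x * rform (rwt S1.μ S1.e) m₁ 0 (A n) x
        ∂(S2.μ 0) : ℝ) : ℂ) := by
    intro n n'
    rw [← integral_complex_ofReal]
    congr 1; ext x; rw [linForm_real, linForm_real]; push_cast; rfl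
  have hdegmono : ∀ {p : ℝ[X]} {a b : ℕ}, p.degree < (a : WithBot ℕ) → a ≤ b →
      p.degree < (b : WithBot ℕ) := fun h hab => h.trans_le (by exact_mod_cast hab)
  intro n n' hn hn'
  refine ⟨?_, ?_⟩
  · intro hne
    rw [hreal, mul_eq_zero]
    right
    rw [Complex.ofReal_eq_zero]
    rcases lt_or_gt_of_ne hne with hlt | hgt
    · have := pairing_zero S2 S1 hb.symm (B n') (A n) (I₁ (n' - 1))
        (fun k hk => hdegmono ((hA n hn).1.1 k hk) (hI₁.2 n (n' - 1) (by omega) k))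
        (hBo n' hn')
      rw [← this, hb]
      congr 1; ext x; ring
    · exact pairing_zero S1 S2 hb (A n) (B n') (I₂ (n - 1))
        (fun k hk => hdegmono ((hB n' hn').1.1 k hk) (hI₂.2 n' (n - 1) (by omega) k))
        (hAo n hn)
  · rw [hreal]
    refine mul_ne_zero (by exact_mod_cast S2.toR.e_ne 0) ?_
    rw [Complex.ofReal_ne_zero]
    intro h0
    obtain ⟨l, hl, hbl, hother⟩ := exists_bump m₂ (I₂ (n - 1)) (I₂ n)
      (hI₂.2 (n - 1) n (by omega)) (by rw [(hI₂.1 n).2.2, (hI₂.1 (n - 1)).2.2]; omega)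
    have hBdeg := (hB n hn).1.1
    -- the leading coefficient of the bumped component is nonzero
    have hlead : (B n l).coeff (I₂ (n - 1) l) ≠ 0 := by
      intro hc0
      obtain ⟨j, hj, hBj⟩ := (hB n hn).1.2.1
      refine hBj (normal S2 S1 hb.symm (I₂ (n - 1)) (I₁ (n - 1)) (hI₂.1 _).1 (hI₁.1 _).1
        (by rw [(hI₂.1 (n - 1)).2.2, (hI₁.1 (n - 1)).2.2]) (B n) ?_ (hBo n hn) j hj)
      intro k hk
      by_cases hkl : k = l
      · subst hkl
        rw [degree_lt_iff_coeff_zero]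
        intro i hi
        rcases hi.lt_or_eq with h | h
        · exact coeff_zero_of_deg (hBdeg k hk) (by omega)
        · rw [← h]; exact hc0
      · rw [← hother k hk hkl]; exact hBdeg k hk
    rw [pairing S1 S2 hb] at h0
    have hO : O S1 S2 (A n) l (I₂ (n - 1) l) = 0 := by
      rw [Finset.sum_eq_single_of_mem l (Finset.mem_Icc.mpr ⟨Nat.zero_le _, hl⟩),
        Finset.sum_eq_single_of_mem (I₂ (n - 1) l)] at h0
      · exact (mul_eq_zero.mp h0).resolve_left hlead
      · rw [Finset.mem_range, Nat.lt_succ_iff]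
        exact le_natDegree_of_ne_zero hlead
      · intro i _ hi
        by_cases hlt : i < I₂ (n - 1) l
        · rw [hAo n hn l hl i hlt, mul_zero]
        · rw [coeff_zero_of_deg (hBdeg l hl) (by omega), zero_mul]
      · intro k hk hkl
        rw [Finset.mem_Icc] at hk
        refine Finset.sum_eq_zero fun i _ => ?_
        by_cases hlt : i < I₂ (n - 1) k
        · rw [hAo n hn k hk.2 i hlt, mul_zero]
        · rw [coeff_zero_of_deg (hBdeg k hk.2) (by rw [hother k hk.2 hkl]; omega), zero_mul]
    obtain ⟨j, hj, hAj⟩ := (hA n hn).1.2.1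
    refine hAj (normal S1 S2 hb (I₁ n) (I₂ n) (hI₁.1 _).1 (hI₂.1 _).1
        (by rw [(hI₁.1 n).2.2, (hI₂.1 n).2.2]) (A n) (hA n hn).1.1 ?_ j hj)
    intro k hk ν hν
    by_cases hlt : ν < I₂ (n - 1) k
    · exact hAo n hn k hk ν hlt
    · by_cases hkl : k = l
      · subst hkl
        have : ν = I₂ (n - 1) k := by omega
        rw [this]; exact hO
      · rw [hother k hk hkl] at hν
        exact absurd hν hlt

end
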